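/- Let a, b, β > 0 and let X and Y be independent random variables on a probability space, with X distributed according to the Gamma(a, β) density and Y according to the Gamma(b, β) density. Then for every t ∈ [0, 1], P( X/(X+Y) ≤ t ) = (Γ(a+b) / (Γ(a) Γ(b))) · ∫_0^t s^{a−1} (1−s)^{b−1} ds; that is, X/(X+Y) has the Beta(a, b) distribution, independently of β. -/

import Mathlib

/-!
In the coordinates `s = x / (x + y)` and `r = x + y` Lebesgue measure is `|r| ds dr`, and `|r|`
times the product of the Gamma(a, β) density at `x = r s` and the Gamma(b, β) density at
`y = r (1 - s)` is the Beta(a, b) density at `s` times the Gamma(a + b, β) density at `r`: the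
exponentials multiply to `exp (-β r)` and the powers of `r` combine to `r ^ (a + b - 1)`. Hence
`X / (X + Y)` and `X + Y` are independent, with laws Beta(a, b) and Gamma(a + b, β).
-/

open MeasureTheory ProbabilityTheory

/-- The Gamma(a, b) density: `f(x; a, b) = (b^a / Γ(a)) x^(a−1) e^(−bx)` for `x > 0`,
and `0` otherwise. -/
noncomputable def gammaDensity (a b x : ℝ) : ℝ :=
  if 0 < x then (b ^ a / Real.Gamma a) * x ^ (a - 1) * Real.exp (-b * x) else 0

open scoped ENNReal

section ChangeOfVariables

lemma lintegral_eq_lintegral_abs_mul_comp_mul_left {f : ℝ → ℝ≥0∞} (hf : Measurable f) {r : ℝ}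
    (hr : r ≠ 0) : ∫⁻ x, f x = ∫⁻ s, ENNReal.ofReal |r| * f (r * s) := by
  conv_lhs => rw [← Real.smul_map_volume_mul_left hr]
  rw [lintegral_smul_measure, lintegral_map hf (by fun_prop), lintegral_const_mul _ (by fun_prop),
    smul_eq_mul]

lemma lintegral_prod_eq_lintegral_ratio_sum {F : ℝ × ℝ → ℝ≥0∞} (hF : Measurable F) :
    ∫⁻ p, F p = ∫⁻ q : ℝ × ℝ, ENNReal.ofReal |q.2| * F (q.2 * q.1, q.2 * (1 - q.1)) :=
  calc ∫⁻ p, F p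
    _ = ∫⁻ x, ∫⁻ y, F (x, y) := lintegral_prod _ hF.aemeasurable
    _ = ∫⁻ x, ∫⁻ r, F (x, r - x) :=
        lintegral_congr fun x => (lintegral_sub_right_eq_self (fun y => F (x, y)) x).symm
    _ = ∫⁻ r, ∫⁻ x, F (x, r - x) :=
        lintegral_lintegral_swap (f := fun x r => F (x, r - x)) (by fun_prop)
    _ = ∫⁻ r, ∫⁻ s, ENNReal.ofReal |r| * F (r * s, r * (1 - s)) := by
        refine lintegral_congr_ae ?_
        filter_upwards [Measure.ae_ne volume (0 : ℝ)] with r hr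
        rw [lintegral_eq_lintegral_abs_mul_comp_mul_left (by fun_prop) hr]
        simp only [mul_sub, mul_one]
    _ = ∫⁻ q : ℝ × ℝ, ENNReal.ofReal |q.2| * F (q.2 * q.1, q.2 * (1 - q.1)) := by
        rw [Measure.volume_eq_prod, lintegral_prod_symm _ (by fun_prop)]

lemma measurePreserving_ratio_sum_withDensity {F : ℝ × ℝ → ℝ≥0∞} (hF : Measurable F) :
    MeasurePreserving (fun p : ℝ × ℝ => (p.1 / (p.1 + p.2), p.1 + p.2)) (volume.withDensity F)
      (volume.withDensity fun q => ENNReal.ofReal |q.2| * F (q.2 * q.1, q.2 * (1 - q.1))) := by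
  refine ⟨by fun_prop, Measure.ext_of_lintegral _ fun φ hφ => ?_⟩
  rw [lintegral_map hφ (by fun_prop), lintegral_withDensity_eq_lintegral_mul _ hF (by fun_prop),
    lintegral_withDensity_eq_lintegral_mul _ (by fun_prop) hφ,
    lintegral_prod_eq_lintegral_ratio_sum (by fun_prop)]
  refine lintegral_congr fun ⟨s, r⟩ => ?_
  rcases eq_or_ne r 0 with rfl | hr
  · simp
  · have hsum : r * s + r * (1 - s) = r := by ring
    simp only [Pi.mul_apply, hsum, mul_div_cancel_left₀ s hr, mul_assoc]

end ChangeOfVariables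

section Densities

@[fun_prop]
lemma measurable_gammaDensity (a β : ℝ) : Measurable (gammaDensity a β) :=
  Measurable.ite measurableSet_Ioi (by fun_prop) (by fun_prop)

lemma gammaDensity_of_pos (a β : ℝ) {x : ℝ} (hx : 0 < x) :
    gammaDensity a β x = β ^ a / Real.Gamma a * x ^ (a - 1) * Real.exp (-β * x) :=
  if_pos hx

lemma gammaDensity_of_nonpos (a β : ℝ) {x : ℝ} (hx : x ≤ 0) : gammaDensity a β x = 0 :=
  if_neg hx.not_gt

lemma gammaDensity_nonneg {a β : ℝ} (ha : 0 < a) (hβ : 0 < β) (x : ℝ) :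
    0 ≤ gammaDensity a β x := by
  unfold gammaDensity
  split_ifs <;> positivity

lemma withDensity_gammaDensity (a β : ℝ) :
    (volume.withDensity fun x => ENNReal.ofReal (gammaDensity a β x)) = gammaMeasure a β := by
  refine withDensity_congr_ae ?_
  -- At the origin the two densities differ when `a = 1`, since `0 ^ 0 = 1`.
  filter_upwards [Measure.ae_ne volume (0 : ℝ)] with x hx
  simp only [gammaPDF, gammaPDFReal, gammaDensity, neg_mul, hx.symm.le_iff_lt]

lemma betaPDFReal_nonneg {a b : ℝ} (ha : 0 < a) (hb : 0 < b) (s : ℝ) : 0 ≤ betaPDFReal a b s := by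
  by_cases hs : 0 < s ∧ s < 1
  · exact (betaPDFReal_pos hs.1 hs.2 ha hb).le
  · exact (if_neg hs).ge

lemma integrable_betaPDFReal {a b : ℝ} (ha : 0 < a) (hb : 0 < b) :
    Integrable (betaPDFReal a b) := by
  refine ⟨by fun_prop, ?_⟩
  rw [hasFiniteIntegral_iff_ofReal (ae_of_all _ (betaPDFReal_nonneg ha hb))]
  exact (lintegral_betaPDF_eq_one ha hb).trans_lt ENNReal.one_lt_top

lemma setIntegral_Iic_betaPDFReal (a b : ℝ) {t : ℝ} (ht : t ∈ Set.Icc (0 : ℝ) 1) :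
    ∫ s in Set.Iic t, betaPDFReal a b s
      = Real.Gamma (a + b) / (Real.Gamma a * Real.Gamma b) *
          ∫ s in (0 : ℝ)..t, s ^ (a - 1) * (1 - s) ^ (b - 1) := by
  have hzero : ∀ s ∈ Set.Iic t \ Set.Ioc 0 t, betaPDFReal a b s = 0 := fun s hs =>
    if_neg fun hs01 => hs.2 ⟨hs01.1, hs.1⟩
  rw [setIntegral_eq_of_subset_of_forall_sdiff_eq_zero measurableSet_Iic Set.Ioc_subset_Iic_self
    hzero, intervalIntegral.integral_of_le ht.1, ← integral_const_mul]
  refine setIntegral_congr_ae measurableSet_Ioc ?_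
  -- At `s = 1` the two integrands differ when `b = 1`, since `0 ^ 0 = 1`.
  filter_upwards [Measure.ae_ne volume (1 : ℝ)] with s hs1 hs
  rw [betaPDFReal, if_pos ⟨hs.1, (hs.2.trans ht.2).lt_of_ne hs1⟩, beta, one_div_div, mul_assoc]

lemma betaMeasure_Iic {a b : ℝ} (ha : 0 < a) (hb : 0 < b) {t : ℝ} (ht : t ∈ Set.Icc (0 : ℝ) 1) :
    betaMeasure a b (Set.Iic t)
      = ENNReal.ofReal (Real.Gamma (a + b) / (Real.Gamma a * Real.Gamma b) *
          ∫ s in (0 : ℝ)..t, s ^ (a - 1) * (1 - s) ^ (b - 1)) := by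
  rw [← setIntegral_Iic_betaPDFReal a b ht, betaMeasure, withDensity_apply _ measurableSet_Iic,
    ofReal_integral_eq_lintegral_ofReal (integrable_betaPDFReal ha hb).integrableOn
      (ae_of_all _ (betaPDFReal_nonneg ha hb))]
  rfl

end Densities

section GammaRatio

variable {a b β : ℝ}

lemma mul_gammaDensity_mul_gammaDensity (ha : 0 < a) (hb : 0 < b) (hβ : 0 < β) {s r : ℝ}
    (hs0 : 0 < s) (hs1 : s < 1) (hr : 0 < r) :
    r * (gammaDensity a β (r * s) * gammaDensity b β (r * (1 - s)))
      = betaPDFReal a b s * gammaDensity (a + b) β r := by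
  have hs1' : 0 < 1 - s := sub_pos.2 hs1
  have hexp : Real.exp (-β * r) = Real.exp (-β * (r * s)) * Real.exp (-β * (r * (1 - s))) := by
    rw [← Real.exp_add]
    ring_nf
  have hpow : r ^ (a + b - 1) = r * (r ^ (a - 1) * r ^ (b - 1)) := by
    rw [← Real.rpow_add hr, mul_comm, ← Real.rpow_add_one hr.ne']
    ring_nf
  rw [gammaDensity_of_pos _ _ (mul_pos hr hs0), gammaDensity_of_pos _ _ (mul_pos hr hs1'),
    gammaDensity_of_pos _ _ hr, betaPDFReal, if_pos ⟨hs0, hs1⟩, beta, hexp, hpow,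
    Real.rpow_add hβ, Real.mul_rpow hr.le hs0.le, Real.mul_rpow hr.le hs1'.le]
  have hΓ : Real.Gamma (a + b) ≠ 0 := (Real.Gamma_pos_of_pos (add_pos ha hb)).ne'
  field_simp

lemma abs_mul_gammaDensity_mul_gammaDensity (ha : 0 < a) (hb : 0 < b) (hβ : 0 < β) (s r : ℝ) :
    |r| * (gammaDensity a β (r * s) * gammaDensity b β (r * (1 - s)))
      = betaPDFReal a b s * gammaDensity (a + b) β r := by
  by_cases h : 0 < r ∧ 0 < s ∧ s < 1
  · obtain ⟨hr, hs0, hs1⟩ := h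
    rw [abs_of_pos hr, mul_gammaDensity_mul_gammaDensity ha hb hβ hs0 hs1 hr]
  · have hright : betaPDFReal a b s * gammaDensity (a + b) β r = 0 := by
      by_cases hr : 0 < r
      · rw [betaPDFReal, if_neg fun hs => h ⟨hr, hs⟩, zero_mul]
      · rw [gammaDensity_of_nonpos _ _ (not_lt.1 hr), mul_zero]
    have hleft : r * s ≤ 0 ∨ r * (1 - s) ≤ 0 := by
      by_contra! hpos
      have hr : 0 < r := by linarith
      exact h ⟨hr, pos_of_mul_pos_right hpos.1 hr.le,
        sub_pos.1 (pos_of_mul_pos_right hpos.2 hr.le)⟩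
    rcases hleft with hx | hy
    · rw [hright, gammaDensity_of_nonpos _ _ hx, zero_mul, mul_zero]
    · rw [hright, gammaDensity_of_nonpos _ _ hy, mul_zero, mul_zero]

lemma measurePreserving_ratio_sum_gammaMeasure (ha : 0 < a) (hb : 0 < b) (hβ : 0 < β) :
    MeasurePreserving (fun p : ℝ × ℝ => (p.1 / (p.1 + p.2), p.1 + p.2))
      ((gammaMeasure a β).prod (gammaMeasure b β))
      ((betaMeasure a b).prod (gammaMeasure (a + b) β)) := by
  have hfactor (q : ℝ × ℝ) :
      ENNReal.ofReal |q.2| * (ENNReal.ofReal (gammaDensity a β (q.2 * q.1)) *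
          ENNReal.ofReal (gammaDensity b β (q.2 * (1 - q.1))))
        = betaPDF a b q.1 * ENNReal.ofReal (gammaDensity (a + b) β q.2) := by
    rw [betaPDF, ← ENNReal.ofReal_mul (betaPDFReal_nonneg ha hb _),
      ← ENNReal.ofReal_mul (gammaDensity_nonneg ha hβ _), ← ENNReal.ofReal_mul (abs_nonneg _),
      abs_mul_gammaDensity_mul_gammaDensity ha hb hβ]
  have hbeta : Measurable (betaPDF a b) := (measurable_betaPDFReal a b).ennreal_ofReal
  simp only [← withDensity_gammaDensity]
  rw [betaMeasure, prod_withDensity (by fun_prop) (by fun_prop),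
    prod_withDensity hbeta (by fun_prop)]
  simp only [← hfactor]
  exact measurePreserving_ratio_sum_withDensity (F := fun p =>
    ENNReal.ofReal (gammaDensity a β p.1) * ENNReal.ofReal (gammaDensity b β p.2)) (by fun_prop)

lemma hasLaw_ratio_of_gammaMeasure {Ω : Type*} [MeasurableSpace Ω] {P : Measure Ω} {X Y : Ω → ℝ}
    (ha : 0 < a) (hb : 0 < b) (hβ : 0 < β) (hX : HasLaw X (gammaMeasure a β) P)
    (hY : HasLaw Y (gammaMeasure b β) P) (hXY : IndepFun X Y P) :
    HasLaw (fun ω => X ω / (X ω + Y ω)) (betaMeasure a b) P := by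
  have := isProbabilityMeasure_gammaMeasure ha hβ
  have := isProbabilityMeasure_gammaMeasure (add_pos ha hb) hβ
  have := hX.isProbabilityMeasure
  exact measurePreserving_fst.fun_comp_hasLaw
    ((measurePreserving_ratio_sum_gammaMeasure ha hb hβ).fun_comp_hasLaw (hXY.hasLaw_prod hX hY))

end GammaRatio

/-- If `X ~ Gamma(a, β)` and `Y ~ Gamma(b, β)` are independent, then `X/(X+Y)` follows
the Beta(a, b) distribution, independently of `β`:
`P(X/(X+Y) ≤ t) = (Γ(a+b)/(Γ(a)Γ(b))) ∫_0^t s^(a−1)(1−s)^(b−1) ds` for `t ∈ [0,1]`. -/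
theorem gamma_ratio_beta {Ω : Type*} [MeasurableSpace Ω] (P : Measure Ω)
    [IsProbabilityMeasure P] (a b β : ℝ) (ha : 0 < a) (hb : 0 < b) (hβ : 0 < β)
    (X Y : Ω → ℝ) (hX : Measurable X) (hY : Measurable Y)
    (hindep : IndepFun X Y P)
    (hXlaw : P.map X = volume.withDensity fun x => ENNReal.ofReal (gammaDensity a β x))
    (hYlaw : P.map Y = volume.withDensity fun x => ENNReal.ofReal (gammaDensity b β x)) :
    ∀ t ∈ Set.Icc (0 : ℝ) 1,
      P {ω | X ω / (X ω + Y ω) ≤ t}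
        = ENNReal.ofReal ((Real.Gamma (a + b) / (Real.Gamma a * Real.Gamma b)) *
            ∫ s in (0 : ℝ)..t, s ^ (a - 1) * (1 - s) ^ (b - 1)) := by
  intro t ht
  have hXgamma : HasLaw X (gammaMeasure a β) P :=
    ⟨hX.aemeasurable, hXlaw.trans (withDensity_gammaDensity a β)⟩
  have hYgamma : HasLaw Y (gammaMeasure b β) P :=
    ⟨hY.aemeasurable, hYlaw.trans (withDensity_gammaDensity b β)⟩
  have hratio : HasLaw (fun ω => X ω / (X ω + Y ω)) (betaMeasure a b) P :=
    hasLaw_ratio_of_gammaMeasure ha hb hβ hXgamma hYgamma hindep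
  exact (hratio.measure_eq measurableSet_Iic).trans (betaMeasure_Iic ha hb ht)
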